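/- Let C be an ℓ-controllable group system. Then for every t ∈ ℤ and every j with 0 ≤ j ≤ ℓ, X_{j−1}^t·(X_j^t ∩ Y_{ℓ−j}^t) = X_j^t, a product of subgroups of the branch group B^t. -/

import Mathlib

open scoped Pointwise

namespace GroupSystemPaper

variable {A : ℤ → Type*} [∀ t, Group (A t)]

/-- `C^{t+}` : codewords of the group system `C` that are the identity before time `t`. -/
def Cplus (C : Subgroup (∀ t, A t)) (t : ℤ) : Subgroup C where
  carrier := {a | ∀ n < t, (a : ∀ s, A s) n = 1}
  one_mem' := by intro n hn; simp
  mul_mem' := by intro a b ha hb n hn; simp [ha n hn, hb n hn]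
  inv_mem' := by intro a ha n hn; simp [ha n hn]

/-- `C^{t−}` : codewords of the group system `C` that are the identity from time `t` on. -/
def Cminus (C : Subgroup (∀ t, A t)) (t : ℤ) : Subgroup C where
  carrier := {a | ∀ n, t ≤ n → (a : ∀ s, A s) n = 1}
  one_mem' := by intro n hn; simp
  mul_mem' := by intro a b ha hb n hn; simp [ha n hn, hb n hn]
  inv_mem' := by intro a ha n hn; simp [ha n hn]

/-- `C^{[t₁,t₂]}` : codewords supported on the interval `[t₁, t₂]`. -/
def Cint (C : Subgroup (∀ t, A t)) (t₁ t₂ : ℤ) : Subgroup C :=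
  Cplus C t₁ ⊓ Cminus C (t₂ + 1)

instance Cplus_normal (C : Subgroup (∀ t, A t)) (t : ℤ) : (Cplus C t).Normal := by
  constructor
  intro x hx g n hn
  have h1 : (x : ∀ s, A s) n = 1 := hx n hn
  simp [h1]

instance Cminus_normal (C : Subgroup (∀ t, A t)) (t : ℤ) : (Cminus C t).Normal := by
  constructor
  intro x hx g n hn
  have h1 : (x : ∀ s, A s) n = 1 := hx n hn
  simp [h1]

instance Cint_normal (C : Subgroup (∀ t, A t)) (t₁ t₂ : ℤ) : (Cint C t₁ t₂).Normal := by
  constructor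
  intro x hx g
  rcases Subgroup.mem_inf.mp hx with ⟨h1, h2⟩
  exact Subgroup.mem_inf.mpr
    ⟨(Cplus_normal C t₁).conj_mem _ h1 g, (Cminus_normal C (t₂ + 1)).conj_mem _ h2 g⟩

/-- The normal subgroup `C^{t−}C^{t+}` of `C`. -/
def stateN (C : Subgroup (∀ t, A t)) (t : ℤ) : Subgroup C :=
  Cminus C t ⊔ Cplus C t

instance stateN_normal (C : Subgroup (∀ t, A t)) (t : ℤ) : (stateN C t).Normal :=
  Subgroup.sup_normal _ _

/-- The canonical state space `Σ^t = C/(C^{t−}C^{t+})`. -/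
abbrev State (C : Subgroup (∀ t, A t)) (t : ℤ) : Type _ :=
  ↥C ⧸ stateN C t

/-- The state projection `σ^t : C → Σ^t`. -/
def sigma (C : Subgroup (∀ t, A t)) (t : ℤ) : ↥C →* State C t :=
  QuotientGroup.mk' (stateN C t)

/-- The evaluation homomorphism `χ^t : C → A^t`. -/
def evalHom (C : Subgroup (∀ t, A t)) (t : ℤ) : ↥C →* A t :=
  (Pi.evalMonoidHom A t).comp C.subtype

/-- The branch homomorphism `β^t : C → Σ^t × A^t × Σ^{t+1}`. -/
def beta (C : Subgroup (∀ t, A t)) (t : ℤ) :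
    ↥C →* State C t × A t × State C (t + 1) :=
  (sigma C t).prod ((evalHom C t).prod (sigma C (t + 1)))

/-- The branch group `B^t = β^t(C)`. -/
def Branch (C : Subgroup (∀ t, A t)) (t : ℤ) :
    Subgroup (State C t × A t × State C (t + 1)) :=
  (beta C t).range

/-- `β^t` with codomain restricted to the branch group `B^t`. -/
def betaRes (C : Subgroup (∀ t, A t)) (t : ℤ) : ↥C →* ↥(Branch C t) :=
  (beta C t).rangeRestrict

/-- `X_j^t = β^t(C^{(t−j)+})` as a subgroup of the branch group `B^t`. -/
def X (C : Subgroup (∀ t, A t)) (j t : ℤ) : Subgroup ↥(Branch C t) :=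
  (Cplus C (t - j)).map (betaRes C t)

/-- `Y_i^t = β^t(C^{(t+i+1)−})` as a subgroup of the branch group `B^t`. -/
def Y (C : Subgroup (∀ t, A t)) (i t : ℤ) : Subgroup ↥(Branch C t) :=
  (Cminus C (t + i + 1)).map (betaRes C t)

instance X_normal (C : Subgroup (∀ t, A t)) (j t : ℤ) : (X C j t).Normal :=
  (Cplus_normal C (t - j)).map _ (MonoidHom.rangeRestrict_surjective _)

instance Y_normal (C : Subgroup (∀ t, A t)) (i t : ℤ) : (Y C i t).Normal :=
  (Cminus_normal C (t + i + 1)).map _ (MonoidHom.rangeRestrict_surjective _)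

/-- `Δ_k^t = X_0^t ∩ Y_k^t`. -/
def Del (C : Subgroup (∀ t, A t)) (k t : ℤ) : Subgroup ↥(Branch C t) :=
  X C 0 t ⊓ Y C k t

/-- `D_k^t = {a ∈ C : β^t(a) ∈ Δ_k^t}`. -/
def D (C : Subgroup (∀ t, A t)) (k t : ℤ) : Subgroup ↥C :=
  (Del C k t).comap (betaRes C t)

/-- Following-branch operator: for `S ⊆ B^{t₁}`,
`FSet C t₁ t₂ S = {β^{t₂}(a) : a ∈ C, β^{t₁}(a) ∈ S}`. -/
def FSet (C : Subgroup (∀ t, A t)) (t₁ t₂ : ℤ) (S : Set ↥(Branch C t₁)) :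
    Set ↥(Branch C t₂) :=
  {x | ∃ a : ↥C, betaRes C t₁ a ∈ S ∧ betaRes C t₂ a = x}

/-- `π^{[t,t+k]} : C → B^t × ⋯ × B^{t+k}`, `a ↦ (β^t(a), …, β^{t+k}(a))`. -/
def piSeg (C : Subgroup (∀ t, A t)) (t : ℤ) (k : ℕ) :
    ↥C →* ∀ j : Fin (k + 1), ↥(Branch C (t + ((j : ℕ) : ℤ))) where
  toFun a := fun j => betaRes C (t + ((j : ℕ) : ℤ)) a
  map_one' := by funext j; simp
  map_mul' a b := by funext j; simp

/-- `π^{[t,t+k]}(D_m^t)`. -/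
def Pseg (C : Subgroup (∀ t, A t)) (t : ℤ) (k : ℕ) (m : ℤ) :
    Subgroup (∀ j : Fin (k + 1), ↥(Branch C (t + ((j : ℕ) : ℤ)))) :=
  (D C m t).map (piSeg C t k)

/-- `β^{t+j}(D_m^t)` : the image of `D_m^t` in the branch group at time `t + j`. -/
def Qb (C : Subgroup (∀ t, A t)) (t m j : ℤ) : Subgroup ↥(Branch C (t + j)) :=
  (D C m t).map (betaRes C (t + j))

/-- The normal subgroup `C^{[t,t+k−1]}C^{[t+1,t+k]}` of `C` (denominator of the granule). -/
def granN (C : Subgroup (∀ t, A t)) (t : ℤ) (k : ℕ) : Subgroup ↥C :=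
  Cint C t (t + k - 1) ⊔ Cint C (t + 1) (t + k)

instance granN_normal (C : Subgroup (∀ t, A t)) (t : ℤ) (k : ℕ) : (granN C t k).Normal :=
  Subgroup.sup_normal _ _

lemma mem_D_of_mem_Cint (C : Subgroup (∀ t, A t)) (t : ℤ) (k : ℕ) {a : ↥C}
    (ha : a ∈ Cint C t (t + k)) : a ∈ D C (k : ℤ) t := by
  rcases Subgroup.mem_inf.mp ha with ⟨h1, h2⟩
  refine Subgroup.mem_comap.mpr (Subgroup.mem_inf.mpr ⟨?_, ?_⟩)
  · exact Subgroup.mem_map.mpr ⟨a, by simpa using h1, rfl⟩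
  · exact Subgroup.mem_map.mpr ⟨a, h2, rfl⟩

/-- `ℓ`-controllability of the group system `C`. -/
def Controllable (C : Subgroup (∀ t, A t)) (ℓ : ℕ) : Prop :=
  ∀ a b : ↥C, ∀ t : ℤ, ∃ c : ↥C,
    (∀ n < t, (c : ∀ s, A s) n = (a : ∀ s, A s) n) ∧
    (∀ n, t + (ℓ : ℤ) ≤ n → (c : ∀ s, A s) n = (b : ∀ s, A s) n)

lemma Cplus_antitone (C : Subgroup (∀ t, A t)) : Antitone (Cplus C) :=
  fun _ _ hst _ ha n hn => ha n (hn.trans_le hst)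

lemma X_mono (C : Subgroup (∀ t, A t)) (t : ℤ) : Monotone fun j => X C j t :=
  fun _ _ hij => Subgroup.map_mono (Cplus_antitone C (sub_le_sub_left hij t))

lemma map_betaRes_Cint_le (C : Subgroup (∀ t, A t)) (j k t : ℤ) :
    (Cint C (t - j) (t + k)).map (betaRes C t) ≤ X C j t ⊓ Y C k t :=
  Subgroup.map_inf_le _ _ _

lemma Controllable.Cplus_add_one_sup_Cint {C : Subgroup (∀ t, A t)} {ℓ : ℕ}
    (h : Controllable C ℓ) (t : ℤ) :
    Cplus C (t + 1) ⊔ Cint C t (t + ℓ) = Cplus C t := by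
  refine le_antisymm (sup_le (Cplus_antitone C (by lia)) inf_le_left) fun a ha => ?_
  -- Splicing at `t + 1`, not `t`, makes `a * c⁻¹` trivial at time `t` as well.
  obtain ⟨c, hca, hc1⟩ := h a 1 (t + 1)
  have hc : c ∈ Cint C t (t + ℓ) :=
    ⟨fun n hn => (hca n (by lia)).trans (ha n hn), fun n hn => hc1 n (by lia)⟩
  have hac : a * c⁻¹ ∈ Cplus C (t + 1) := fun n hn => by simp [hca n hn]
  simpa only [inv_mul_cancel_right] using Subgroup.mul_mem_sup hac hc

theorem statement4_general {C : Subgroup (∀ t, A t)} {ℓ : ℕ} (h : Controllable C ℓ) (t j : ℤ) :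
    (X C (j - 1) t : Set ↥(Branch C t)) *
        ((X C j t ⊓ Y C ((ℓ : ℤ) - j) t : Subgroup ↥(Branch C t)) : Set ↥(Branch C t)) =
      (X C j t : Set ↥(Branch C t)) := by
  rw [← Subgroup.normal_mul, SetLike.coe_set_eq]
  refine le_antisymm (sup_le (X_mono C t (sub_le_self j zero_le_one)) inf_le_left) ?_
  calc X C j t
      = (Cplus C (t - (j - 1)) ⊔ Cint C (t - j) (t + (ℓ - j))).map (betaRes C t) := by
        rw [X, ← h.Cplus_add_one_sup_Cint (t - j), sub_add t, sub_add_eq_add_sub, add_sub_assoc]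
    _ = X C (j - 1) t ⊔ (Cint C (t - j) (t + (ℓ - j))).map (betaRes C t) :=
        Subgroup.map_sup _ _ _
    _ ≤ X C (j - 1) t ⊔ (X C j t ⊓ Y C (ℓ - j) t) :=
        sup_le_sup_left (map_betaRes_Cint_le C j (ℓ - j) t) _

/-- If `C` is `ℓ`-controllable then for every `t` and every `0 ≤ j ≤ ℓ`,
`X_{j−1}^t·(X_j^t ∩ Y_{ℓ−j}^t) = X_j^t`. -/
theorem statement4 (C : Subgroup (∀ t, A t)) (ℓ : ℕ) (h : Controllable C ℓ)
    (t j : ℤ) (hj0 : 0 ≤ j) (hjℓ : j ≤ (ℓ : ℤ)) :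
    (X C (j - 1) t : Set ↥(Branch C t)) *
        ((X C j t ⊓ Y C ((ℓ : ℤ) - j) t : Subgroup ↥(Branch C t)) : Set ↥(Branch C t)) =
      (X C j t : Set ↥(Branch C t)) :=
  statement4_general h t j

end GroupSystemPaper
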